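/- Let $R_0$ be an arbitrary commutative Noetherian ring, $\mathfrak{f} \geq 4$, $\mathcal{R} = R_0[x_{i,j}; t_i]$, and $J = \operatorname{Pf}_4(\mathbf{X}) + I_1(\mathbf{t}\mathbf{X})$. Then $\mathcal{R}/J$ is an integral domain if and only if $R_0$ is an integral domain; and $\mathcal{R}/J$ is a normal ring if and only if $R_0$ is normal. -/

import Mathlib

open CategoryTheory

noncomputable section
namespace AluffiStmt

universe u

/-- The index set for the entries of a generic `f × f` alternating matrix:
pairs `(i, j)` with `i < j`. -/
abbrev P2 (f : ℕ) := {p : Fin f × Fin f // p.1 < p.2}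

/-- `l` is a (weakly) regular sequence on `R`: each entry is a nonzerodivisor
modulo the ideal generated by the previous entries. -/
def IsRegSeq (R : Type*) [CommRing R] (l : List R) : Prop :=
  ∀ (i : ℕ) (h : i < l.length) (x : R),
    l.get ⟨i, h⟩ * x ∈ Ideal.span {y | y ∈ l.take i} →
      x ∈ Ideal.span {y | y ∈ l.take i}

/-- The grade of an ideal: the supremum of lengths of regular sequences on `R`
contained in `I`. -/
def grade {R : Type*} [CommRing R] (I : Ideal R) : ℕ :=
  sSup {n | ∃ l : List R, l.length = n ∧ (∀ r ∈ l, r ∈ I) ∧ IsRegSeq R l}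

/-- Projective dimension at most `n`, expressed by vanishing of `Ext^i (M, -)`
for all `i > n`. -/
def projDimLE (R : Type u) [CommRing R] (M : ModuleCat.{u} R) (n : ℕ) : Prop :=
  ∀ (N : ModuleCat.{u} R) (i : ℕ), n < i →
    Subsingleton (((Ext R (ModuleCat.{u} R) i).obj (Opposite.op M)).obj N)

/-- `M` has projective dimension exactly `n`. -/
def projDimEq (R : Type u) [CommRing R] (M : ModuleCat.{u} R) (n : ℕ) : Prop :=
  projDimLE R M n ∧ ∀ k : ℕ, projDimLE R M k → n ≤ k

/-- An ideal `I` is perfect if `grade I = pd_R (R/I)`. -/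
def IsPerfectIdeal (R : Type u) [CommRing R] (I : Ideal R) : Prop :=
  projDimEq R (ModuleCat.of R (R ⧸ I)) (grade I)
/-- Variables for the ring `𝓡 = R₀[x_{i,j}; t_i]`. -/
abbrev Var (f : ℕ) := P2 f ⊕ Fin f

/-- The `(i,j)` entry of the generic alternating matrix `X` in `𝓡`. -/
def xvt (R₀ : Type u) [CommRing R₀] (f : ℕ) (i j : Fin f) : MvPolynomial (Var f) R₀ :=
  if h : i < j then MvPolynomial.X (Sum.inl ⟨(i, j), h⟩)
  else if h : j < i then - MvPolynomial.X (Sum.inl ⟨(j, i), h⟩) else 0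

/-- The entry `t_i` of the generic row vector `t` in `𝓡`. -/
def tvt (R₀ : Type u) [CommRing R₀] (f : ℕ) (i : Fin f) : MvPolynomial (Var f) R₀ :=
  MvPolynomial.X (Sum.inr i)

/-- The Pfaffian of the `4 × 4` principal submatrix of `X` with rows/columns
`i < j < k < l`. -/
def pf4t (R₀ : Type u) [CommRing R₀] (f : ℕ) (i j k l : Fin f) : MvPolynomial (Var f) R₀ :=
  xvt R₀ f i j * xvt R₀ f k l - xvt R₀ f i k * xvt R₀ f j l + xvt R₀ f i l * xvt R₀ f j k

/-- The ideal `Pf₄(X)` of `𝓡`. -/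
def Pf4t (R₀ : Type u) [CommRing R₀] (f : ℕ) : Ideal (MvPolynomial (Var f) R₀) :=
  Ideal.span {p | ∃ i j k l : Fin f, i < j ∧ j < k ∧ k < l ∧ p = pf4t R₀ f i j k l}

/-- The `j`-th entry of the row vector `t·X`. -/
def tX (R₀ : Type u) [CommRing R₀] (f : ℕ) (j : Fin f) : MvPolynomial (Var f) R₀ :=
  ∑ i : Fin f, tvt R₀ f i * xvt R₀ f i j

/-- The ideal `I₁(t·X)` generated by the entries of `t·X`. -/
def ItX (R₀ : Type u) [CommRing R₀] (f : ℕ) : Ideal (MvPolynomial (Var f) R₀) :=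
  Ideal.span {p | ∃ j : Fin f, p = tX R₀ f j}

/-- The ideal `J = Pf₄(X) + I₁(t·X)`. -/
def Jt (R₀ : Type u) [CommRing R₀] (f : ℕ) : Ideal (MvPolynomial (Var f) R₀) :=
  Pf4t R₀ f + ItX R₀ f
/-- A commutative ring is normal if its localization at every prime ideal is
an integrally closed domain. -/
def IsNormalRing (R : Type u) [CommRing R] : Prop :=
  ∀ (P : Ideal R) [P.IsPrime],
    IsDomain (Localization.AtPrime P) ∧ IsIntegrallyClosed (Localization.AtPrime P)


section Abstract

open MvPolynomial in
/-- Straightening: if every forbidden product is congruent to lighter products, then every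
polynomial is congruent to a combination of standard monomials. -/
theorem straighten {σ R : Type*} [CommRing R] (J : Ideal (MvPolynomial σ R)) (ω : σ → ℕ)
    (F : σ → σ → Prop) (hF : ∀ u v, F u v → u ≠ v)
    (h : ∀ u v, F u v → (X u * X v : MvPolynomial σ R) ∈ J.restrictScalars R ⊔
      Submodule.span R {q | ∃ a b, ω a + ω b < ω u + ω v ∧ q = X a * X b}) (q : MvPolynomial σ R) :
    ∃ p : MvPolynomial σ R, (∀ m ∈ p.support, ∀ u v, F u v → m u = 0 ∨ m v = 0) ∧ q - p ∈ J := by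
  set St : Set (σ →₀ ℕ) := {m | ∀ u v, F u v → m u = 0 ∨ m v = 0} with hSt
  set N : Submodule R (MvPolynomial σ R) :=
    J.restrictScalars R ⊔ restrictSupport R St with hN
  have hmul : ∀ (r x : MvPolynomial σ R), x ∈ J.restrictScalars R → x * r ∈ J.restrictScalars R :=
    fun r x hx => J.mul_mem_right r hx
  have key : ∀ (n : ℕ) (m : σ →₀ ℕ), Finsupp.weight ω m = n → monomial m (1 : R) ∈ N := by
    intro n
    induction n using Nat.strong_induction_on with
    | _ n ih =>
      intro m hm
      by_cases hs : m ∈ St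
      · refine Submodule.mem_sup_right ?_
        rw [mem_restrictSupport_iff]
        intro m' hm'
        have := support_monomial_subset hm'
        rw [Finset.mem_singleton] at this
        exact this ▸ hs
      · simp only [hSt, Set.mem_ofPred_eq, not_forall, not_or] at hs
        obtain ⟨u, v, huv, hu, hv⟩ := hs
        have hne := hF u v huv
        obtain ⟨m', rfl⟩ : ∃ m', m = Finsupp.single u 1 + Finsupp.single v 1 + m' := by
          refine ⟨m - (Finsupp.single u 1 + Finsupp.single v 1), ?_⟩
          rw [add_tsub_cancel_of_le]
          intro w
          classical
          simp only [Finsupp.add_apply, Finsupp.single_apply]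
          split_ifs with h1 h2 h2
          · subst h1; subst h2; exact absurd rfl hne
          · subst h1; omega
          · subst h2; omega
          · omega
        have e1 : monomial (Finsupp.single u 1 + Finsupp.single v 1 + m') (1 : R)
            = (X u * X v) * monomial m' 1 := by
          simp [X, monomial_mul]
        rw [e1]
        have : ∀ y ∈ J.restrictScalars R ⊔
            Submodule.span R {q | ∃ a b, ω a + ω b < ω u + ω v ∧ q = X a * X b},
            y * monomial m' 1 ∈ N := by
          intro y hy
          obtain ⟨y1, hy1, y2, hy2, rfl⟩ := Submodule.mem_sup.1 hy
          clear hy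
          rw [add_mul]
          refine N.add_mem (Submodule.mem_sup_left (hmul _ _ hy1)) ?_
          induction hy2 using Submodule.span_induction with
          | mem x hx =>
            obtain ⟨a, b, hab, rfl⟩ := hx
            have e2 : (X a * X b) * monomial m' (1 : R)
              = monomial (Finsupp.single a 1 + Finsupp.single b 1 + m') (1 : R) := by
              simp [X, monomial_mul]
            rw [e2]
            refine ih _ ?_ _ rfl
            rw [← hm]
            simp only [map_add, Finsupp.weight_single, smul_eq_mul, one_mul]
            omega
          | zero => simp
          | add x y hx hy h1 h2 =>
            rw [add_mul]
            exact N.add_mem h1 h2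
          | smul c x hx h1 =>
            rw [smul_mul_assoc]
            exact N.smul_mem _ h1
        exact this _ (h u v huv)
  have hq : q ∈ N := by
    rw [MvPolynomial.as_sum q]
    refine N.sum_mem fun m _ => ?_
    have : monomial m (coeff m q) = coeff m q • monomial m (1 : R) := by
      simp [smul_monomial]
    rw [this]
    exact N.smul_mem _ (key _ m rfl)
  obtain ⟨y, hy, p, hp, rfl⟩ := Submodule.mem_sup.1 hq
  refine ⟨p, fun m hm => hp hm, ?_⟩
  simpa using hy

open MvPolynomial in
theorem lead_monomial {σ τ R : Type*} [CommRing R]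
    (φ : MvPolynomial σ R →ₐ[R] Polynomial (MvPolynomial τ R))
    (w : σ → ℕ) (e : σ → τ →₀ ℕ) (ε : σ → R)
    (h1 : ∀ v, (φ (X v)).natDegree ≤ w v)
    (h2 : ∀ v, (φ (X v)).coeff (w v) = monomial (e v) (ε v)) (m : σ →₀ ℕ) :
    (φ (monomial m 1)).natDegree ≤ m.sum (fun v k => k * w v) ∧
    (φ (monomial m 1)).coeff (m.sum (fun v k => k * w v)) =
      monomial (m.sum (fun v k => k • e v)) (m.prod (fun v k => ε v ^ k)) := by
  induction m using Finsupp.induction with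
  | zero => simp
  | single_add a b m ha hb ih =>
    classical
    have hd : Disjoint (Finsupp.single a b).support m.support := by
      rw [Finset.disjoint_left]
      intro x hx
      have := Finsupp.support_single_subset hx
      simp only [Finset.mem_singleton] at this
      subst this; exact ha
    rw [Finsupp.sum_add_index_of_disjoint hd, Finsupp.sum_add_index_of_disjoint hd,
      Finsupp.prod_add_index_of_disjoint hd, Finsupp.sum_single_index (by simp),
      Finsupp.sum_single_index (by simp), Finsupp.prod_single_index (by simp)]
    have e1 : monomial (Finsupp.single a b + m) (1 : R) = X a ^ b * monomial m 1 := by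
      rw [X_pow_eq_monomial, monomial_mul, one_mul]
    rw [e1, map_mul, map_pow]
    have h3 : ((φ (X a)) ^ b).natDegree ≤ b * w a :=
      Polynomial.natDegree_pow_le_of_le b (h1 a)
    refine ⟨Polynomial.natDegree_mul_le_of_le h3 ih.1, ?_⟩
    rw [Polynomial.coeff_mul_add_eq_of_natDegree_le h3 ih.1, ih.2,
      Polynomial.coeff_pow_of_natDegree_le (h1 a), h2, monomial_pow, monomial_mul]

open MvPolynomial in
/-- Independence of a set of monomials with distinct leading exponents. -/
theorem lead_indep {σ τ R : Type*} [CommRing R] [IsDomain R]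
    (φ : MvPolynomial σ R →ₐ[R] Polynomial (MvPolynomial τ R))
    (w : σ → ℕ) (e : σ → τ →₀ ℕ) (ε : σ → R) (hε : ∀ v, ε v ≠ 0)
    (h1 : ∀ v, (φ (X v)).natDegree ≤ w v)
    (h2 : ∀ v, (φ (X v)).coeff (w v) = monomial (e v) (ε v))
    (St : Set (σ →₀ ℕ))
    (hinj : Set.InjOn (fun m : σ →₀ ℕ => m.sum (fun v k => k • e v)) St)
    (p : MvPolynomial σ R) (hp : ∀ m ∈ p.support, m ∈ St) (h0 : φ p = 0) : p = 0 := by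
  classical
  by_contra hne
  set W : (σ →₀ ℕ) → ℕ := fun m => m.sum (fun v k => k * w v) with hW
  obtain ⟨m0, hm0, hmax⟩ := Finset.exists_max_image p.support W (by simpa using hne)
  have hs : φ p = ∑ m ∈ p.support, coeff m p • φ (monomial m 1) := by
    conv_lhs => rw [MvPolynomial.as_sum p]
    rw [map_sum]
    refine Finset.sum_congr rfl fun m _ => ?_
    rw [← map_smul, smul_monomial, smul_eq_mul, mul_one]
  have hc : coeff (m0.sum (fun v k => k • e v)) ((φ p).coeff (W m0)) =
      coeff m0 p * m0.prod (fun v k => ε v ^ k) := by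
    rw [hs, Polynomial.finsetSum_coeff, MvPolynomial.coeff_sum, Finset.sum_eq_single m0]
    · rw [Polynomial.coeff_smul, (lead_monomial φ w e ε h1 h2 m0).2]
      simp
    · intro m hm hmm
      rw [Polynomial.coeff_smul]
      obtain ⟨l1, l2⟩ := lead_monomial φ w e ε h1 h2 m
      rcases (hmax m hm).lt_or_eq with hlt | heq
      · rw [Polynomial.coeff_eq_zero_of_natDegree_lt (lt_of_le_of_lt l1 hlt)]; simp
      · have : W m0 = m.sum (fun v k => k * w v) := heq.symm
        rw [this, l2, MvPolynomial.coeff_smul, coeff_monomial, if_neg, smul_zero]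
        intro h
        exact hmm (hinj (hp m hm) (hp m0 hm0) h)
    · intro h; exact absurd hm0 h
  rw [h0] at hc
  simp only [Polynomial.coeff_zero, MvPolynomial.coeff_zero] at hc
  rcases mul_eq_zero.1 hc.symm with h | h
  · exact (mem_support_iff.1 hm0) h
  · rw [Finsupp.prod, Finset.prod_eq_zero_iff] at h
    obtain ⟨v, _, hv⟩ := h
    exact pow_ne_zero _ (hε v) hv

open MvPolynomial in
theorem reg_pair {σ R : Type*} [CommRing R] [IsDomain R] (J : Ideal (MvPolynomial σ R))
    (F : σ → σ → Prop)
    (hspan : ∀ q : MvPolynomial σ R, ∃ p : MvPolynomial σ R,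
      (∀ m ∈ p.support, ∀ u v, F u v → m u = 0 ∨ m v = 0) ∧ q - p ∈ J)
    (hind : ∀ p : MvPolynomial σ R,
      (∀ m ∈ p.support, ∀ u v, F u v → m u = 0 ∨ m v = 0) → p ∈ J → p = 0)
    (c d : σ) (hcd : c ≠ d) (hc : ∀ u v, F u v → u ≠ c ∧ v ≠ c)
    (hd : ∀ u v, F u v → u ≠ d ∧ v ≠ d) (q r : MvPolynomial σ R)
    (h : X d * q - X c * r ∈ J) : ∃ q', q - X c * q' ∈ J := by
  classical
  obtain ⟨q1, hq1, hq1J⟩ := hspan q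
  obtain ⟨r1, hr1, hr1J⟩ := hspan r
  have hmulX : ∀ (x : σ) (_ : ∀ u v, F u v → u ≠ x ∧ v ≠ x) (p : MvPolynomial σ R)
      (_ : ∀ m ∈ p.support, ∀ u v, F u v → m u = 0 ∨ m v = 0),
      ∀ m ∈ (X x * p).support, ∀ u v, F u v → m u = 0 ∨ m v = 0 := by
    intro x hx p hp m hm u v huv
    rw [support_X_mul] at hm
    obtain ⟨m', hm', rfl⟩ := Finset.mem_map.1 hm
    have := hp m' hm' u v huv
    obtain ⟨hu, hv⟩ := hx u v huv
    simpa [addLeftEmbedding, Finsupp.single_apply, hu.symm, hv.symm] using this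
  have h0 : X d * q1 - X c * r1 = 0 := by
    apply hind
    · intro m hm
      rcases Finset.mem_union.1 (support_sub _ _ _ hm) with h' | h'
      · exact hmulX d hd q1 hq1 m h'
      · exact hmulX c hc r1 hr1 m h'
    · have : X d * q1 - X c * r1 = (X d * q - X c * r) - X d * (q - q1) + X c * (r - r1) := by ring
      rw [this]
      exact J.add_mem (J.sub_mem h (J.mul_mem_left _ hq1J)) (J.mul_mem_left _ hr1J)
  have hdvd : (X c : MvPolynomial σ R) ∣ X d * q1 := ⟨r1, sub_eq_zero.1 h0⟩
  rw [X_dvd_mul_iff] at hdvd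
  rcases hdvd with h' | ⟨q', rfl⟩
  · rw [X_dvd_X] at h'; exact absurd h' hcd
  · exact ⟨q', hq1J⟩

theorem dvd_of_reg {A : Type*} [CommRing A] [IsDomain A] (x y : A) (hx : x ≠ 0)
    (hreg : ∀ a b, y * a = x * b → x ∣ a) (n m : ℕ) (a b : A) (h : y ^ m * a = x ^ n * b) :
    x ^ n ∣ a := by
  have h1 : ∀ (m : ℕ) (a b : A), y ^ m * a = x * b → x ∣ a := by
    intro m
    induction m with
    | zero => intro a b h; exact ⟨b, by simpa using h⟩
    | succ m ih =>
      intro a b h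
      obtain ⟨c, hc⟩ := hreg (y ^ m * a) b (by rw [← h]; ring)
      exact ih a c hc
  induction n generalizing a with
  | zero => simp
  | succ n ih =>
    obtain ⟨a', rfl⟩ := h1 m a (x ^ n * b) (by rw [h]; ring)
    obtain ⟨c, rfl⟩ := ih a' (mul_left_cancel₀ hx (by rw [pow_succ] at h; linear_combination h))
    exact ⟨c, by ring⟩

theorem intClosed_of_reg {A : Type*} [CommRing A] [IsDomain A] (x y : A) (hx : x ≠ 0)
    (hreg : ∀ a b, y * a = x * b → x ∣ a)
    (h1 : ∀ z : FractionRing A, IsIntegral A z → ∃ (n : ℕ) (a : A),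
      algebraMap A (FractionRing A) x ^ n * z = algebraMap A _ a)
    (h2 : ∀ z : FractionRing A, IsIntegral A z → ∃ (n : ℕ) (a : A),
      algebraMap A (FractionRing A) y ^ n * z = algebraMap A _ a) : IsIntegrallyClosed A := by
  rw [isIntegrallyClosed_iff (FractionRing A)]
  intro z hz
  obtain ⟨n, a, ha⟩ := h1 z hz
  obtain ⟨m, b, hb⟩ := h2 z hz
  have hinj := IsFractionRing.injective A (FractionRing A)
  have : y ^ m * a = x ^ n * b := by
    apply hinj
    rw [map_mul, map_mul, map_pow, map_pow, ← ha, ← hb]; ring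
  obtain ⟨c, rfl⟩ := dvd_of_reg x y hx hreg n m a b this
  refine ⟨c, ?_⟩
  rw [map_mul, map_pow] at ha
  refine (mul_left_cancel₀ (pow_ne_zero n ?_) ha).symm
  rwa [Ne, map_eq_zero_iff _ hinj]

theorem integral_away {A B K : Type*} [CommRing A] [IsDomain A] [CommRing B] [IsDomain B]
    [IsIntegrallyClosed B] [Field K] [Algebra A K] [IsFractionRing A K]
    (ψ : B →+* A) (hψ : Function.Injective ψ) (x : B) (hx : x ≠ 0)
    (h : ∀ s : A, ∃ (n : ℕ) (b : B), ψ x ^ n * s = ψ b) (z : K)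
    (hz : IsIntegral A z) : ∃ (n : ℕ) (a : A),
      algebraMap A K (ψ x) ^ n * z = algebraMap A _ a := by
  let _ : Algebra B A := ψ.toAlgebra
  let _ : Algebra B K := ((algebraMap A K).comp ψ).toAlgebra
  have hinjA := IsFractionRing.injective A K
  have hxA : ψ x ≠ 0 := by rwa [Ne, map_eq_zero_iff _ hψ]
  have : FaithfulSMul B K :=
    (faithfulSMul_iff_algebraMap_injective B K).2 (hinjA.comp hψ)
  have : IsFractionRing B K := by
    refine IsFractionRing.of_field B _ fun z => ?_
    obtain ⟨p, q, hq, rfl⟩ := IsFractionRing.div_surjective (A := A) z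
    obtain ⟨n, b, hb⟩ := h p
    obtain ⟨m, c, hc⟩ := h q
    have hq0 : algebraMap A K q ≠ 0 := by
      rw [Ne, map_eq_zero_iff _ hinjA]; exact nonZeroDivisors.ne_zero hq
    have hx0 : algebraMap A K (ψ x) ≠ 0 := by
      rwa [Ne, map_eq_zero_iff _ hinjA]
    refine ⟨x ^ m * b, x ^ n * c, ?_⟩
    have e1 : algebraMap B K (x ^ m * b) =
      algebraMap A K (ψ x) ^ m * (algebraMap A K (ψ x) ^ n *
        algebraMap A _ p) := by
      change algebraMap A _ (ψ _) = _
      rw [map_mul ψ, ← hb]; simp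
    have e2 : algebraMap B K (x ^ n * c) =
      algebraMap A K (ψ x) ^ n * (algebraMap A K (ψ x) ^ m *
        algebraMap A _ q) := by
      change algebraMap A _ (ψ _) = _
      rw [map_mul ψ, ← hc]; simp
    rw [e1, e2]
    field_simp
  have hz' : ∃ n : ℕ, IsIntegral B (algebraMap A K (ψ x) ^ n * z) := by
    obtain ⟨p, hp, hpz⟩ := hz
    have hN : ∃ N : ℕ, ∀ i, ψ x ^ N * p.coeff i ∈ Set.range ψ := by
      choose n b hb using fun i => h (p.coeff i)
      refine ⟨p.support.sup n, fun i => ?_⟩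
      by_cases hi : i ∈ p.support
      · have := Finset.le_sup (f := n) hi
        refine ⟨x ^ (p.support.sup n - n i) * b i, ?_⟩
        rw [map_mul, ← hb, map_pow, ← mul_assoc, ← pow_add, Nat.sub_add_cancel this]
      · rw [Polynomial.notMem_support_iff.1 hi]
        exact ⟨0, by simp⟩
    obtain ⟨N, hN⟩ := hN
    refine ⟨N, ?_⟩
    have hl : p.scaleRoots (ψ x ^ N) ∈ Polynomial.lifts ψ := by
      rw [Polynomial.lifts_iff_coeff_lifts]
      intro i
      rw [Polynomial.coeff_scaleRoots]
      rcases lt_trichotomy i p.natDegree with hi | hi | hi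
      · obtain ⟨k, hk⟩ : ∃ k, p.natDegree - i = k + 1 := ⟨p.natDegree - i - 1, by omega⟩
        obtain ⟨b, hb⟩ := hN i
        refine ⟨b * (x ^ N) ^ k, ?_⟩
        rw [hk, map_mul, hb, map_pow, map_pow]; ring
      · subst hi
        exact ⟨1, by simp [hp.coeff_natDegree]⟩
      · rw [Polynomial.coeff_eq_zero_of_natDegree_lt hi]
        exact ⟨0, by simp⟩
    obtain ⟨q, hq1, _, hq3⟩ := Polynomial.lifts_and_natDegree_eq_and_monic hl
      ((Polynomial.monic_scaleRoots_iff _).2 hp)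
    refine ⟨q, hq3, ?_⟩
    have := Polynomial.scaleRoots_eval₂_eq_zero (s := ψ x ^ N) (algebraMap A K) hpz
    rw [← hq1, Polynomial.eval₂_map, map_pow] at this
    exact this
  obtain ⟨n, hn⟩ := hz'
  obtain ⟨b, hb⟩ := IsIntegrallyClosed.isIntegral_iff.1 hn
  exact ⟨n, ψ b, hb.symm⟩

theorem mvpoly_intClosed (σ R : Type*) [Finite σ] [CommRing R] [IsDomain R]
    [IsIntegrallyClosed R] : IsIntegrallyClosed (MvPolynomial σ R) := by
  obtain ⟨n, ⟨e⟩⟩ := Finite.exists_equiv_fin σ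
  suffices IsIntegrallyClosed (MvPolynomial (Fin n) R) from
    IsIntegrallyClosed.of_equiv (MvPolynomial.renameEquiv R e).symm.toRingEquiv
  clear e
  induction n with
  | zero =>
    exact IsIntegrallyClosed.of_equiv
      (MvPolynomial.isEmptyRingEquiv R (Fin 0)).symm
  | succ n ih =>
    exact IsIntegrallyClosed.of_equiv
      (MvPolynomial.finSuccEquiv R n).symm.toRingEquiv

theorem intClosed_retract {A B : Type*} [CommRing A] [CommRing B] [IsDomain B]
    [IsIntegrallyClosed B] (i : A →+* B) (r : B →+* A) (hr : ∀ a, r (i a) = a) :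
    IsDomain A ∧ IsIntegrallyClosed A := by
  have hi : Function.Injective i := Function.LeftInverse.injective hr
  have : IsDomain A := hi.isDomain i
  refine ⟨inferInstance, ?_⟩
  rw [isIntegrallyClosed_iff (FractionRing A)]
  intro z hz
  have hinj := IsFractionRing.injective A (FractionRing A)
  have hinjB := IsFractionRing.injective B (FractionRing B)
  set j : FractionRing A →+* FractionRing B := IsFractionRing.map hi with hj
  have hjc : ∀ a, j (algebraMap A _ a) = algebraMap B _ (i a) := fun a => by
    simp [hj, IsFractionRing.map]
  have hz' : IsIntegral B (j z) := hz.map_of_comp_eq i j (by ext a; simp [hjc])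
  obtain ⟨c, hc⟩ := IsIntegrallyClosed.isIntegral_iff.1 hz'
  obtain ⟨p, q, hq, rfl⟩ := IsFractionRing.div_surjective (A := A) z
  have hq0 : algebraMap A (FractionRing A) q ≠ 0 := by
    rw [Ne, map_eq_zero_iff _ hinj]; exact nonZeroDivisors.ne_zero hq
  have hq1 : algebraMap B (FractionRing B) (i q) ≠ 0 := by
    rw [← hjc]; rwa [Ne, map_eq_zero_iff _ j.injective]
  have : i p = c * i q := by
    apply hinjB
    rw [map_mul, hc, map_div₀, hjc, hjc]; field_simp
  have h2 : p = r c * q := by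
    have := congrArg r this
    rwa [map_mul, hr, hr] at this
  refine ⟨r c, ?_⟩
  rw [h2, map_mul]; field_simp

end Abstract

section Comb

theorem rect_min {n : ℕ} (M : Fin n → Fin n → ℕ)
    (hM : ∀ i j k l, i < j → k < l → M i l = 0 ∨ M j k = 0) (p q : Fin n) :
    ∑ i ∈ Finset.Iic p, ∑ j ∈ Finset.Iic q, M i j =
      min (∑ i ∈ Finset.Iic p, ∑ j, M i j) (∑ j ∈ Finset.Iic q, ∑ i, M i j) := by
  have e1 : ∑ i ∈ Finset.Iic p, ∑ j, M i j = ∑ i ∈ Finset.Iic p, ∑ j ∈ Finset.Iic q, M i j +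
      ∑ i ∈ Finset.Iic p, ∑ j ∈ (Finset.Iic q)ᶜ, M i j := by
    rw [← Finset.sum_add_distrib]
    exact Finset.sum_congr rfl fun i _ => (Finset.sum_add_sum_compl _ _).symm
  have e2 : ∑ j ∈ Finset.Iic q, ∑ i, M i j = ∑ i ∈ Finset.Iic p, ∑ j ∈ Finset.Iic q, M i j +
      ∑ j ∈ Finset.Iic q, ∑ i ∈ (Finset.Iic p)ᶜ, M i j := by
    rw [Finset.sum_comm (s := Finset.Iic p), ← Finset.sum_add_distrib]
    exact Finset.sum_congr rfl fun i _ => (Finset.sum_add_sum_compl _ _).symm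
  have e3 : ∑ i ∈ Finset.Iic p, ∑ j ∈ (Finset.Iic q)ᶜ, M i j = 0 ∨
      ∑ j ∈ Finset.Iic q, ∑ i ∈ (Finset.Iic p)ᶜ, M i j = 0 := by
    by_contra! h
    obtain ⟨h1, h2⟩ := h
    obtain ⟨i, hi, h1⟩ := Finset.exists_ne_zero_of_sum_ne_zero h1
    obtain ⟨l, hl, h1⟩ := Finset.exists_ne_zero_of_sum_ne_zero h1
    obtain ⟨k, hk, h2⟩ := Finset.exists_ne_zero_of_sum_ne_zero h2
    obtain ⟨j, hj, h2⟩ := Finset.exists_ne_zero_of_sum_ne_zero h2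
    simp only [Finset.mem_Iic, Finset.mem_compl, not_le] at hi hl hk hj
    rcases hM i j k l (lt_of_le_of_lt hi hj) (lt_of_le_of_lt hk hl) with h | h
    · exact h1 h
    · exact h2 h
  omega

theorem transport {n : ℕ} (M N : Fin n → Fin n → ℕ)
    (hM : ∀ i j k l, i < j → k < l → M i l = 0 ∨ M j k = 0)
    (hN : ∀ i j k l, i < j → k < l → N i l = 0 ∨ N j k = 0)
    (hr : ∀ i, ∑ j, M i j = ∑ j, N i j) (hc : ∀ j, ∑ i, M i j = ∑ i, N i j) (p q : Fin n) :
    M p q = N p q := by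
  have hrect : ∀ p q : Fin n, ∑ i ∈ Finset.Iic p, ∑ j ∈ Finset.Iic q, M i j =
      ∑ i ∈ Finset.Iic p, ∑ j ∈ Finset.Iic q, N i j := by
    intro p q
    rw [rect_min M hM, rect_min N hN]
    simp only [hr, hc]
  have key : ∀ (s : ℕ) (p q : Fin n), p.val + q.val = s → M p q = N p q := by
    intro s
    induction s using Nat.strong_induction_on with
    | _ s ih =>
      intro p q hs
      have h := hrect p q
      rw [← Finset.sum_product', ← Finset.sum_product'] at h
      have hmem : (p, q) ∈ Finset.Iic p ×ˢ Finset.Iic q := by simp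
      rw [← Finset.add_sum_erase _ _ hmem, ← Finset.add_sum_erase _ _ hmem] at h
      have h2 : ∑ x ∈ (Finset.Iic p ×ˢ Finset.Iic q).erase (p, q), M x.1 x.2 =
          ∑ x ∈ (Finset.Iic p ×ˢ Finset.Iic q).erase (p, q), N x.1 x.2 := by
        refine Finset.sum_congr rfl fun x hx => ?_
        obtain ⟨i, j⟩ := x
        simp only [Finset.mem_erase, Finset.mem_product, Finset.mem_Iic, ne_eq,
          Prod.mk.injEq] at hx
        refine ih (i.val + j.val) ?_ i j rfl
        have h3 : i.val ≤ p.val := hx.2.1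
        have h4 : j.val ≤ q.val := hx.2.2
        have h5 : ¬ (i.val = p.val ∧ j.val = q.val) := fun hh => hx.1 ⟨Fin.ext hh.1, Fin.ext hh.2⟩
        omega
      dsimp only at h
      omega
  exact key _ p q rfl

theorem pick {n : ℕ} (w : Fin n → ℕ) (L : Fin n) : w L = ∑ k, if k = L then w k else 0 := by
  simp

theorem comb_inj {n : ℕ} (L1 L2 L3 : Fin n) (h12 : L1 ≠ L2) (h13 : L1 ≠ L3) (h23 : L2 ≠ L3)
    (M N : Fin n → Fin n → ℕ) (u v : Fin n → ℕ)
    (hM : ∀ i j k l, i < j → k < l → M i l = 0 ∨ M j k = 0)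
    (hN : ∀ i j k l, i < j → k < l → N i l = 0 ∨ N j k = 0)
    (hM0 : ∀ j, j ≠ L1 → M L2 j = 0) (hN0 : ∀ j, j ≠ L1 → N L2 j = 0)
    (hM1 : u L1 ≠ 0 → ∀ j, M j L1 = 0) (hN1 : v L1 ≠ 0 → ∀ j, N j L1 = 0)
    (hM2 : u L2 ≠ 0 → M L2 L1 = 0) (hN2 : v L2 ≠ 0 → N L2 L1 = 0)
    (h0 : ∀ j, ∑ i, M i j + ∑ k, (if (if k = L1 then L2 else L1) = j then u k else 0) =
      ∑ i, N i j + ∑ k, (if (if k = L1 then L2 else L1) = j then v k else 0))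
    (h1 : ∀ i, ∑ j, M i j + ∑ k, (if (if k = L1 ∨ k = L2 then L3 else L2) = i then u k else 0) =
      ∑ j, N i j + ∑ k, (if (if k = L1 ∨ k = L2 then L3 else L2) = i then v k else 0))
    (h2 : ∀ i, ∑ k, (if (if k = L1 ∨ k = L2 then L3 else k) = i then u k else 0) =
      ∑ k, (if (if k = L1 ∨ k = L2 then L3 else k) = i then v k else 0)) :
    (∀ i j, M i j = N i j) ∧ ∀ k, u k = v k := by
  have hT : ∑ k, u k = ∑ k, v k := by
    have := Finset.sum_congr (rfl : (Finset.univ : Finset (Fin n)) = _) fun i _ => h2 i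
    rw [Finset.sum_comm, Finset.sum_comm (f := fun i k =>
      (if (if k = L1 ∨ k = L2 then L3 else k) = i then v k else 0))] at this
    simpa using this
  have hY : ∀ w : Fin n → ℕ, ∑ k, w k = w L1 +
      ∑ k, (if (if k = L1 then L2 else L1) = L1 then w k else 0) := by
    intro w
    rw [pick w L1, ← Finset.sum_add_distrib]
    refine Finset.sum_congr rfl fun k _ => ?_
    by_cases hk : k = L1
    · simp [hk, h12.symm]
    · simp [hk]
  have hZ : ∀ w : Fin n → ℕ, ∑ k, w k = w L1 + w L2 +
      ∑ k, (if (if k = L1 ∨ k = L2 then L3 else L2) = L2 then w k else 0) := by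
    intro w
    rw [pick w L1,
      pick w L2, ← Finset.sum_add_distrib,
      ← Finset.sum_add_distrib]
    refine Finset.sum_congr rfl fun k _ => ?_
    by_cases hk : k = L1
    · simp [hk, h12, h23.symm]
    · by_cases hk2 : k = L2
      · simp [hk2, h12.symm, h23.symm]
      · simp [hk, hk2]
  have hML : ∑ j, M L2 j = M L2 L1 := by
    rw [Finset.sum_eq_single L1 (fun j _ hj => hM0 j hj) (by simp)]
  have hNL : ∑ j, N L2 j = N L2 L1 := by
    rw [Finset.sum_eq_single L1 (fun j _ hj => hN0 j hj) (by simp)]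
  have hu1 : u L1 = v L1 := by
    have a1 := hY u
    have a2 := hY v
    have a3 := h0 L1
    have a4 : u L1 ≠ 0 → ∑ i, M i L1 = 0 := fun h => Finset.sum_eq_zero fun i _ => hM1 h i
    have a5 : v L1 ≠ 0 → ∑ i, N i L1 = 0 := fun h => Finset.sum_eq_zero fun i _ => hN1 h i
    omega
  have hu2 : u L2 = v L2 := by
    have a1 := hZ u
    have a2 := hZ v
    have a3 := h1 L2
    rw [hML, hNL] at a3
    have a4 : u L1 ≠ 0 → M L2 L1 = 0 := fun h => hM1 h _
    have a5 : v L1 ≠ 0 → N L2 L1 = 0 := fun h => hN1 h _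
    omega
  have hu : ∀ k, u k = v k := by
    intro k
    by_cases hk1 : k = L1
    · rw [hk1, hu1]
    by_cases hk2 : k = L2
    · rw [hk2, hu2]
    by_cases hk3 : k = L3
    · subst hk3
      have hW : ∀ w : Fin n → ℕ,
          ∑ i, (if (if i = L1 ∨ i = L2 then k else i) = k then w i else 0) = w L1 + w L2 + w k := by
        intro w
        rw [pick w L1,
          pick w L2,
          pick w k, ← Finset.sum_add_distrib,
          ← Finset.sum_add_distrib]
        refine Finset.sum_congr rfl fun i _ => ?_
        by_cases hi : i = L1
        · simp [hi, h12, h13]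
        · by_cases hi2 : i = L2
          · simp [hi2, h12.symm, h23]
          · simp [hi, hi2]
      have := h2 k
      rw [hW, hW] at this
      omega
    · have hW : ∀ w : Fin n → ℕ,
          ∑ i, (if (if i = L1 ∨ i = L2 then L3 else i) = k then w i else 0) = w k := by
        intro w
        rw [pick w k]
        refine Finset.sum_congr rfl fun i _ => ?_
        by_cases hi : i = L1
        · simp [hi, Ne.symm hk1, Ne.symm hk3]
        · by_cases hi2 : i = L2
          · simp [hi2, Ne.symm hk2, Ne.symm hk3]
          · simp [hi, hi2]
      have := h2 k
      rwa [hW, hW] at this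
  refine ⟨?_, hu⟩
  have huv : u = v := funext hu
  subst huv
  exact transport M N hM hN (fun i => Nat.add_right_cancel (h1 i))
    (fun j => Nat.add_right_cancel (h0 j))

end Comb

section Concrete

variable {R : Type u} [CommRing R] {f : ℕ}

theorem xvt_lt {i j : Fin f} (h : i < j) :
    xvt R f i j = MvPolynomial.X (Sum.inl ⟨(i, j), h⟩) := by
  rw [xvt, dif_pos h]

theorem xvt_gt {i j : Fin f} (h : j < i) :
    xvt R f i j = - MvPolynomial.X (Sum.inl ⟨(j, i), h⟩) := by
  rw [xvt, dif_neg h.asymm, dif_pos h]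

theorem xvt_self (i : Fin f) : xvt R f i i = 0 := by
  rw [xvt, dif_neg (lt_irrefl i), dif_neg (lt_irrefl i)]

theorem xvt_swap (i j : Fin f) : xvt R f j i = - xvt R f i j := by
  rcases lt_trichotomy i j with h | h | h
  · rw [xvt_gt h, xvt_lt h]
  · subst h; simp [xvt_self]
  · rw [xvt_lt h, xvt_gt h, neg_neg]

theorem pf4_mem_of_lt {i j k l : Fin f} (h1 : i < j) (h2 : j < k) (h3 : k < l) :
    pf4t R f i j k l ∈ Jt R f :=
  Submodule.mem_sup_left (Ideal.subset_span ⟨i, j, k, l, h1, h2, h3, rfl⟩)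

theorem tX_mem (j : Fin f) : tX R f j ∈ Jt R f :=
  Submodule.mem_sup_right (Ideal.subset_span ⟨j, rfl⟩)

theorem pf4_swap12 (i j k l : Fin f) : pf4t R f j i k l = - pf4t R f i j k l := by
  simp only [pf4t]; rw [xvt_swap i j]; ring

theorem pf4_swap23 (i j k l : Fin f) : pf4t R f i k j l = - pf4t R f i j k l := by
  simp only [pf4t]; rw [xvt_swap j k]; ring

theorem pf4_swap34 (i j k l : Fin f) : pf4t R f i j l k = - pf4t R f i j k l := by
  simp only [pf4t]; rw [xvt_swap k l]; ring

theorem pf4_mem_of_le {i j k l : Fin f} (h1 : i ≤ j) (h2 : j ≤ k) (h3 : k ≤ l) :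
    pf4t R f i j k l ∈ Jt R f := by
  rcases h1.eq_or_lt with rfl | h1
  · have : pf4t R f i i k l = 0 := by simp only [pf4t, xvt_self]; ring
    rw [this]; exact Ideal.zero_mem _
  rcases h2.eq_or_lt with rfl | h2
  · have : pf4t R f i j j l = 0 := by simp only [pf4t, xvt_self]; ring
    rw [this]; exact Ideal.zero_mem _
  rcases h3.eq_or_lt with rfl | h3
  · have : pf4t R f i j k k = 0 := by simp only [pf4t, xvt_self]; ring
    rw [this]; exact Ideal.zero_mem _
  exact pf4_mem_of_lt h1 h2 h3

theorem pf4_mem3 {i j k : Fin f} (h1 : i ≤ j) (h2 : j ≤ k) (l : Fin f) :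
    pf4t R f i j k l ∈ Jt R f := by
  rcases le_total k l with h | h
  · exact pf4_mem_of_le h1 h2 h
  rw [pf4_swap34, neg_mem_iff]
  rcases le_total j l with h' | h'
  · exact pf4_mem_of_le h1 h' h
  rw [pf4_swap23, neg_mem_iff]
  rcases le_total i l with h'' | h''
  · exact pf4_mem_of_le h'' h' h2
  rw [pf4_swap12, neg_mem_iff]
  exact pf4_mem_of_le h'' h1 h2

theorem pf4_mem2 {i j : Fin f} (h1 : i ≤ j) (k l : Fin f) :
    pf4t R f i j k l ∈ Jt R f := by
  rcases le_total j k with h | h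
  · exact pf4_mem3 h1 h l
  rw [pf4_swap23, neg_mem_iff]
  rcases le_total i k with h' | h'
  · exact pf4_mem3 h' h l
  rw [pf4_swap12, neg_mem_iff]
  exact pf4_mem3 h' h1 l

theorem pf4_mem (i j k l : Fin f) : pf4t R f i j k l ∈ Jt R f := by
  rcases le_total i j with h | h
  · exact pf4_mem2 h k l
  · rw [pf4_swap12, neg_mem_iff]; exact pf4_mem2 h k l

section Lift
variable {L : Type*} [CommRing L]

/-- The generic vector orthogonal to `a` and `b`, with pivots `p`, `q`. -/
def tvec (p q : Fin f) (a b s : Fin f → L) (k : Fin f) : L :=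
  s k * (a p * b q - a q * b p)
    + (if k = p then a q * (∑ i, s i * b i) - b q * (∑ i, s i * a i) else 0)
    + (if k = q then - (a p * (∑ i, s i * b i)) + b p * (∑ i, s i * a i) else 0)

theorem tvec_a (p q : Fin f) (a b s : Fin f → L) : ∑ k, tvec p q a b s k * a k = 0 := by
  simp only [tvec, add_mul, ite_mul, zero_mul, Finset.sum_add_distrib, Finset.sum_ite_eq',
    Finset.mem_univ, if_true]
  have : ∑ k, s k * (a p * b q - a q * b p) * a k =
      (a p * b q - a q * b p) * ∑ k, s k * a k := by
    rw [Finset.mul_sum]; exact Finset.sum_congr rfl fun k _ => by ring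
  rw [this]; ring

theorem tvec_b (p q : Fin f) (a b s : Fin f → L) : ∑ k, tvec p q a b s k * b k = 0 := by
  simp only [tvec, add_mul, ite_mul, zero_mul, Finset.sum_add_distrib, Finset.sum_ite_eq',
    Finset.mem_univ, if_true]
  have : ∑ k, s k * (a p * b q - a q * b p) * b k =
      (a p * b q - a q * b p) * ∑ k, s k * b k := by
    rw [Finset.mul_sum]; exact Finset.sum_congr rfl fun k _ => by ring
  rw [this]; ring

variable [Algebra R L]

variable (R) in
/-- The evaluation attached to `a`, `b`, `s`. -/
def evalHom (p q : Fin f) (a b s : Fin f → L) : MvPolynomial (Var f) R →ₐ[R] L :=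
  MvPolynomial.aeval (Sum.elim (fun v : P2 f => b v.1.1 * a v.1.2 - a v.1.1 * b v.1.2)
    (tvec p q a b s))

theorem evalHom_xvt (p q : Fin f) (a b s : Fin f → L) (i j : Fin f) :
    evalHom R p q a b s (xvt R f i j) = b i * a j - a i * b j := by
  rcases lt_trichotomy i j with h | h | h
  · rw [xvt_lt h]; simp [evalHom]
  · subst h; rw [xvt_self]; simp; ring
  · rw [xvt_gt h]; simp [evalHom]; ring

theorem evalHom_tvt (p q : Fin f) (a b s : Fin f → L) (i : Fin f) :
    evalHom R p q a b s (tvt R f i) = tvec p q a b s i := by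
  simp [evalHom, tvt]

theorem evalHom_J (p q : Fin f) (a b s : Fin f → L) (y : MvPolynomial (Var f) R)
    (hy : y ∈ Jt R f) : evalHom R p q a b s y = 0 := by
  have : Jt R f ≤ RingHom.ker (evalHom R p q a b s) := by
    rw [Jt, Pf4t, ItX, Submodule.add_eq_sup, sup_le_iff, Ideal.span_le, Ideal.span_le]
    constructor
    · rintro _ ⟨i, j, k, l, -, -, -, rfl⟩
      simp only [SetLike.mem_coe, RingHom.mem_ker, pf4t, map_add, map_sub, map_mul, evalHom_xvt]
      ring
    · rintro _ ⟨j, rfl⟩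
      simp only [SetLike.mem_coe, RingHom.mem_ker, tX, map_sum, map_mul, evalHom_xvt, evalHom_tvt]
      have e : ∀ i, tvec p q a b s i * (b i * a j - a i * b j) =
        a j * (tvec p q a b s i * b i) - b j * (tvec p q a b s i * a i) := fun i => by ring
      simp only [e, Finset.sum_sub_distrib, ← Finset.mul_sum, tvec_a, tvec_b]
      ring
  exact this hy

end Lift

/-- Forbidden pairs of variables. -/
def Forb (f : ℕ) : Var f → Var f → Prop
  | Sum.inl p, Sum.inl q => p.1.1 < q.1.1 ∧ q.1.2 < p.1.2
  | Sum.inr k, Sum.inl q => (k.val + 1 = f ∧ q.1.2 = k) ∨ (k.val + 2 = f ∧ q.1.1 = k)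
  | _, Sum.inr _ => False

/-- Weights for the straightening. -/
def wt (f : ℕ) : Var f → ℕ
  | Sum.inl p => (p.1.2.val - p.1.1.val) ^ 2
  | Sum.inr k => if k.val + 1 = f then 3 * f ^ 2 else if k.val + 2 = f then f ^ 2 else 0

/-- Products of weight less than `B`. -/
def lowSpan (R : Type u) [CommRing R] (f B : ℕ) : Submodule R (MvPolynomial (Var f) R) :=
  Submodule.span R {q | ∃ a b, wt f a + wt f b < B ∧ q = MvPolynomial.X a * MvPolynomial.X b}

theorem low_tx (B : ℕ) (i j : Fin f)
    (h1 : i < j → wt f (Sum.inr i) + (j.val - i.val) ^ 2 < B)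
    (h2 : j < i → wt f (Sum.inr i) + (i.val - j.val) ^ 2 < B) :
    tvt R f i * xvt R f i j ∈ lowSpan R f B := by
  rcases lt_trichotomy i j with h | h | h
  · rw [xvt_lt h]
    exact Submodule.subset_span ⟨_, _, h1 h, rfl⟩
  · subst h; rw [xvt_self, mul_zero]; exact Submodule.zero_mem _
  · rw [xvt_gt h, mul_neg]
    exact Submodule.neg_mem _ (Submodule.subset_span ⟨_, _, h2 h, rfl⟩)

theorem straight_concrete (hf : 4 ≤ f) (u v : Var f) (huv : Forb f u v) :
    (MvPolynomial.X u * MvPolynomial.X v : MvPolynomial (Var f) R) ∈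
      (Jt R f).restrictScalars R ⊔ lowSpan R f (wt f u + wt f v) := by
  classical
  rcases u with ⟨⟨i, l⟩, hil⟩ | k
  · rcases v with ⟨⟨j, k⟩, hjk⟩ | _
    · obtain ⟨hij, hkl⟩ := huv
      dsimp only at hil hjk hij hkl
      have e : (MvPolynomial.X (Sum.inl ⟨(i, l), hil⟩) * MvPolynomial.X (Sum.inl ⟨(j, k), hjk⟩) :
          MvPolynomial (Var f) R) = pf4t R f i j k l +
          (MvPolynomial.X (Sum.inl ⟨(i, k), hij.trans hjk⟩) *
            MvPolynomial.X (Sum.inl ⟨(j, l), hjk.trans hkl⟩)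
          - MvPolynomial.X (Sum.inl ⟨(i, j), hij⟩) * MvPolynomial.X (Sum.inl ⟨(k, l), hkl⟩)) := by
        rw [pf4t, xvt_lt hij, xvt_lt hkl, xvt_lt (hij.trans hjk), xvt_lt (hjk.trans hkl),
          xvt_lt hil, xvt_lt hjk]
        ring
      rw [e]
      obtain ⟨x, hx⟩ : ∃ x, j.val = i.val + x + 1 := ⟨j.val - i.val - 1, by omega⟩
      obtain ⟨y, hy⟩ : ∃ y, k.val = j.val + y + 1 := ⟨k.val - j.val - 1, by omega⟩
      obtain ⟨z, hz⟩ : ∃ z, l.val = k.val + z + 1 := ⟨l.val - k.val - 1, by omega⟩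
      have d1 : l.val - i.val = x + y + z + 3 := by omega
      have d2 : k.val - j.val = y + 1 := by omega
      have d3 : k.val - i.val = x + y + 2 := by omega
      have d4 : l.val - j.val = y + z + 2 := by omega
      have d5 : j.val - i.val = x + 1 := by omega
      have d6 : l.val - k.val = z + 1 := by omega
      refine Submodule.add_mem _ (Submodule.mem_sup_left (pf4_mem i j k l))
        (Submodule.mem_sup_right (Submodule.sub_mem _ ?_ ?_))
      · refine Submodule.subset_span ⟨_, _, ?_, rfl⟩
        simp only [wt, d1, d2, d3, d4]
        nlinarith [Nat.zero_le (x * z)]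
      · refine Submodule.subset_span ⟨_, _, ?_, rfl⟩
        simp only [wt, d1, d2, d5, d6]
        nlinarith [Nat.zero_le (x * z), Nat.zero_le (x * y), Nat.zero_le (y * z)]
    · exact huv.elim
  · rcases v with ⟨⟨j, k'⟩, hjk⟩ | _
    · dsimp only at hjk
      have sq : ∀ a b : Fin f, (a.val - b.val) ^ 2 < f ^ 2 := fun a b =>
        Nat.pow_lt_pow_left (by omega) (by norm_num)
      have lw : ∀ i : Fin f, i.val + 1 ≠ f → wt f (Sum.inr i) ≤ f ^ 2 := by
        intro i hi
        simp only [wt, if_neg hi]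
        split_ifs <;> simp
      rcases huv with ⟨hk, rfl⟩ | ⟨hk, rfl⟩
      · dsimp only at hk hjk ⊢
        have e : (MvPolynomial.X (Sum.inr k') * MvPolynomial.X (Sum.inl ⟨(j, k'), hjk⟩) :
            MvPolynomial (Var f) R) = - tX R f j +
            ∑ i ∈ Finset.univ.erase k', tvt R f i * xvt R f i j := by
          rw [tX, ← Finset.add_sum_erase _ _ (Finset.mem_univ k'), xvt_gt hjk, tvt]
          ring
        rw [e]
        refine Submodule.add_mem _ (Submodule.mem_sup_left (Submodule.neg_mem _ (tX_mem j)))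
          (Submodule.mem_sup_right (Submodule.sum_mem _ fun i hi => ?_))
        have hi' : i.val + 1 ≠ f := fun h =>
          (Finset.mem_erase.1 hi).1 (Fin.ext (by omega))
        have hw : wt f (Sum.inr k') = 3 * f ^ 2 := by simp [wt, hk]
        have hl := lw i hi'
        rw [hw]
        refine low_tx _ i j (fun _ => ?_) (fun _ => ?_)
        · have := sq j i; omega
        · have := sq i j; omega
      · dsimp only at hk hjk ⊢
        have hk' : k'.val + 1 = f := by
          have : j.val < k'.val := hjk
          omega
        have e : (MvPolynomial.X (Sum.inr j) * MvPolynomial.X (Sum.inl ⟨(j, k'), hjk⟩) :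
            MvPolynomial (Var f) R) = tX R f k' +
            - ∑ i ∈ Finset.univ.erase j, tvt R f i * xvt R f i k' := by
          rw [tX, ← Finset.add_sum_erase _ _ (Finset.mem_univ j), xvt_lt hjk, tvt]
          ring
        rw [e]
        refine Submodule.add_mem _ (Submodule.mem_sup_left (tX_mem k'))
          (Submodule.mem_sup_right (Submodule.neg_mem _ (Submodule.sum_mem _ fun i hi => ?_)))
        have hi' : i.val + 2 ≠ f := fun h =>
          (Finset.mem_erase.1 hi).1 (Fin.ext (by omega))
        have hw : wt f (Sum.inr j) = f ^ 2 := by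
          simp only [wt]; rw [if_neg (by omega), if_pos hk]
        rw [hw]
        refine low_tx _ i k' (fun h => ?_) (fun h => ?_)
        · have hl : wt f (Sum.inr i) = 0 := by
            simp only [wt]; rw [if_neg (by have : i.val < k'.val := h; omega), if_neg hi']
          have := sq k' i; omega
        · have : k'.val < i.val := h
          omega
    · exact huv.elim

theorem hspan (hf : 4 ≤ f) (q : MvPolynomial (Var f) R) : ∃ p : MvPolynomial (Var f) R,
    (∀ m ∈ p.support, ∀ u v, Forb f u v → m u = 0 ∨ m v = 0) ∧ q - p ∈ Jt R f := by
  refine straighten (Jt R f) (wt f) (Forb f) ?_ (straight_concrete hf) q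
  rintro u v h rfl
  rcases u with u | u
  · exact lt_irrefl _ h.1
  · exact h

end Concrete

section Indep

variable {R : Type u} [CommRing R] {f : ℕ}

/-- `P` has degree at most `n` with coefficient `c` in degree `n`. -/
def Lead {D : Type*} [CommRing D] (P : Polynomial D) (n : ℕ) (c : D) : Prop :=
  P.natDegree ≤ n ∧ P.coeff n = c

theorem Lead.mul {D : Type*} [CommRing D] {P Q : Polynomial D} {n m : ℕ} {c d : D}
    (hP : Lead P n c) (hQ : Lead Q m d) : Lead (P * Q) (n + m) (c * d) :=
  ⟨Polynomial.natDegree_mul_le_of_le hP.1 hQ.1, by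
    rw [Polynomial.coeff_mul_add_eq_of_natDegree_le hP.1 hQ.1, hP.2, hQ.2]⟩

theorem Lead.add_low {D : Type*} [CommRing D] {P Q : Polynomial D} {n : ℕ} {c : D}
    (hP : Lead P n c) (hQ : Q.natDegree < n) : Lead (P + Q) n c :=
  ⟨Polynomial.natDegree_add_le_of_degree_le hP.1 hQ.le, by
    rw [Polynomial.coeff_add, hP.2, Polynomial.coeff_eq_zero_of_natDegree_lt hQ, add_zero]⟩

theorem Lead.sub_low {D : Type*} [CommRing D] {P Q : Polynomial D} {n : ℕ} {c : D}
    (hP : Lead P n c) (hQ : Q.natDegree < n) : Lead (P - Q) n c := by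
  rw [sub_eq_add_neg]; exact hP.add_low (by rwa [Polynomial.natDegree_neg])

theorem Lead.neg {D : Type*} [CommRing D] {P : Polynomial D} {n : ℕ} {c : D}
    (hP : Lead P n c) : Lead (-P) n (-c) :=
  ⟨by rw [Polynomial.natDegree_neg]; exact hP.1, by rw [Polynomial.coeff_neg, hP.2]⟩

theorem lead_CX {D : Type*} [CommRing D] (c : D) (n : ℕ) :
    Lead (Polynomial.C c * Polynomial.X ^ n) n c :=
  ⟨Polynomial.natDegree_C_mul_X_pow_le c n, by simp⟩

theorem lead_C {D : Type*} [CommRing D] (c : D) : Lead (Polynomial.C c) 0 c :=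
  ⟨by simp, by simp⟩

variable (R f) in
/-- Coefficient ring of the parametrization. -/
abbrev DD := MvPolynomial (Fin 3 × Fin f) R

variable (R) in
def av (i : Fin f) : Polynomial (DD R f) :=
  Polynomial.C (MvPolynomial.X (0, i)) * Polynomial.X ^ i.val

variable (R) in
def bv (i : Fin f) : Polynomial (DD R f) := Polynomial.C (MvPolynomial.X (1, i))

variable (R) in
def sv (i : Fin f) : Polynomial (DD R f) :=
  if i.val + 2 < f then
    Polynomial.C (MvPolynomial.X (2, i)) * Polynomial.X ^ (if i.val + 3 = f then 1 else 0)
  else 0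

theorem sv_deg (i : Fin f) : (sv R i).natDegree ≤ (if i.val + 3 = f then 1 else 0) := by
  by_cases h : i.val + 2 < f
  · rw [sv, if_pos h]
    exact Polynomial.natDegree_C_mul_X_pow_le _ _
  · simp [sv, h]

theorem lead_Q (L3 : Fin f) (h3 : L3.val + 3 = f) :
    Lead (∑ i, sv R i * bv R i) 1 (MvPolynomial.X (2, L3) * MvPolynomial.X (1, L3)) := by
  constructor
  · refine Polynomial.natDegree_sum_le_of_forall_le _ _ fun i _ => ?_
    refine (Polynomial.natDegree_mul_le_of_le (sv_deg i) (lead_C _).1).trans ?_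
    split_ifs <;> simp
  · rw [Polynomial.finsetSum_coeff, Finset.sum_eq_single L3]
    · simp [sv, bv, h3, show L3.val + 2 < f by omega]
    · intro i _ hi
      have : i.val + 3 ≠ f := fun h => hi (Fin.ext (by omega))
      apply Polynomial.coeff_eq_zero_of_natDegree_lt
      have h := Polynomial.natDegree_mul_le_of_le (sv_deg (R := R) i)
        (lead_C (MvPolynomial.X (1, i) : DD R f)).1
      rw [if_neg this] at h
      exact lt_of_le_of_lt h (by norm_num)
    · simp

theorem deg_P (hf : 4 ≤ f) : (∑ i, sv R (f := f) i * av R i).natDegree ≤ f - 2 := by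
  refine Polynomial.natDegree_sum_le_of_forall_le _ _ fun i _ => ?_
  by_cases h : i.val + 2 < f
  · refine (Polynomial.natDegree_mul_le_of_le (sv_deg i) (lead_CX _ _).1).trans ?_
    split_ifs <;> omega
  · simp [sv, h]

/-- Leading degrees. -/
def wl (f : ℕ) : Var f → ℕ
  | Sum.inl p => p.1.2.val
  | Sum.inr k => if k.val + 1 = f then f - 1 else if k.val + 2 = f then f else
      (if k.val + 3 = f then 1 else 0) + (f - 1)

/-- Leading signs. -/
def el (R : Type u) [CommRing R] (f : ℕ) : Var f → R
  | Sum.inl _ => 1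
  | Sum.inr k => if k.val + 2 = f then -1 else 1

/-- Leading exponents. -/
def xl (L1 L2 L3 : Fin f) : Var f → (Fin 3 × Fin f) →₀ ℕ
  | Sum.inl p => Finsupp.single (0, p.1.2) 1 + Finsupp.single (1, p.1.1) 1
  | Sum.inr k => Finsupp.single (0, if k = L1 then L2 else L1) 1 +
      Finsupp.single (1, if k = L1 ∨ k = L2 then L3 else L2) 1 +
      Finsupp.single (2, if k = L1 ∨ k = L2 then L3 else k) 1

theorem lead_var (hf : 4 ≤ f) (L1 L2 L3 : Fin f) (h1 : L1.val + 1 = f) (h2 : L2.val + 2 = f)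
    (h3 : L3.val + 3 = f) (v : Var f) :
    Lead (evalHom R L1 L2 (av R) (bv R) (sv R) (MvPolynomial.X v)) (wl f v)
      (MvPolynomial.monomial (xl L1 L2 L3 v) (el R f v)) := by
  have h12 : L1 ≠ L2 := fun h => by rw [h] at h1; omega
  rcases v with ⟨⟨i, j⟩, hij⟩ | k
  · have e : evalHom R L1 L2 (av R) (bv R) (sv R) (MvPolynomial.X (Sum.inl ⟨(i, j), hij⟩)) =
        av R j * bv R i - av R i * bv R j := by
      rw [← xvt_lt, evalHom_xvt]; ring
    have e2 : MvPolynomial.monomial (xl L1 L2 L3 (Sum.inl ⟨(i, j), hij⟩))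
        (el R f (Sum.inl ⟨(i, j), hij⟩)) =
        MvPolynomial.X (0, j) * MvPolynomial.X (1, i) := by
      simp [xl, el, MvPolynomial.X, MvPolynomial.monomial_mul]
    rw [e, e2]
    refine Lead.sub_low ((lead_CX _ _).mul (lead_C _)) ?_
    refine lt_of_le_of_lt (Polynomial.natDegree_mul_le_of_le (lead_CX _ _).1 (lead_C _).1) ?_
    exact hij
  · have e : evalHom R L1 L2 (av R) (bv R) (sv R) (MvPolynomial.X (Sum.inr k)) =
        tvec L1 L2 (av R) (bv R) (sv R) k := evalHom_tvt _ _ _ _ _ _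
    rw [e]
    have hs1 : sv R L1 = 0 := by simp [sv]; omega
    have hs2 : sv R L2 = 0 := by simp [sv]; omega
    have hQ := lead_Q (R := R) L3 h3
    have hP := deg_P (R := R) hf
    have hbP : ∀ i, (bv R i * ∑ i, sv R i * av R i).natDegree < f - 1 := fun i =>
      lt_of_le_of_lt (Polynomial.natDegree_mul_le_of_le
        (lead_C (MvPolynomial.X (1, i) : DD R f)).1 hP) (by omega)
    by_cases hk1 : k = L1
    · subst hk1
      have e1 : tvec k L2 (av R) (bv R) (sv R) k =
          av R L2 * (∑ i, sv R i * bv R i) - bv R L2 * (∑ i, sv R i * av R i) := by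
        simp [tvec, hs1, h12]
      have e2 : MvPolynomial.monomial (xl k L2 L3 (Sum.inr k)) (el R f (Sum.inr k)) =
          MvPolynomial.X (0, L2) * (MvPolynomial.X (2, L3) * MvPolynomial.X (1, L3)) := by
        have : k.val + 2 ≠ f := by omega
        simp [xl, el, MvPolynomial.X, MvPolynomial.monomial_mul, this]
        rw [add_assoc, add_comm (Finsupp.single (1, L3) 1)]
      have e3 : wl f (Sum.inr k) = L2.val + 1 := by simp only [wl]; rw [if_pos h1]; omega
      rw [e1, e2, e3]
      refine Lead.sub_low ((lead_CX _ _).mul hQ) ((hbP L2).trans_le (by omega))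
    by_cases hk2 : k = L2
    · subst hk2
      have e1 : tvec L1 k (av R) (bv R) (sv R) k =
          -(av R L1 * (∑ i, sv R i * bv R i)) + bv R L1 * (∑ i, sv R i * av R i) := by
        simp [tvec, hs2, h12.symm]
      have e2 : MvPolynomial.monomial (xl L1 k L3 (Sum.inr k)) (el R f (Sum.inr k)) =
          -(MvPolynomial.X (0, L1) * (MvPolynomial.X (2, L3) * MvPolynomial.X (1, L3))) := by
        simp [xl, el, MvPolynomial.X, MvPolynomial.monomial_mul, h2, h12.symm]
        rw [add_assoc, add_comm (Finsupp.single (1, L3) 1)]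
      have e3 : wl f (Sum.inr k) = L1.val + 1 := by
        simp only [wl]; rw [if_neg (by omega), if_pos h2]; omega
      rw [e1, e2, e3]
      refine Lead.add_low ((lead_CX _ _).mul hQ).neg ((hbP L1).trans_le (by omega))
    · have hk1' : k.val + 1 ≠ f := fun h => hk1 (Fin.ext (by omega))
      have hk2' : k.val + 2 ≠ f := fun h => hk2 (Fin.ext (by omega))
      have e1 : tvec L1 L2 (av R) (bv R) (sv R) k =
          sv R k * (av R L1 * bv R L2 - av R L2 * bv R L1) := by
        simp [tvec, hk1, hk2]
      have e2 : MvPolynomial.monomial (xl L1 L2 L3 (Sum.inr k)) (el R f (Sum.inr k)) =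
          MvPolynomial.X (2, k) * (MvPolynomial.X (0, L1) * MvPolynomial.X (1, L2)) := by
        simp [xl, el, MvPolynomial.X, MvPolynomial.monomial_mul, hk1, hk2, hk2']
        rw [add_comm]
      have e3 : wl f (Sum.inr k) = (if k.val + 3 = f then 1 else 0) + (L1.val + 0) := by
        simp only [wl]; rw [if_neg hk1', if_neg hk2']; omega
      rw [e1, e2, e3]
      refine Lead.mul ?_ (Lead.sub_low ((lead_CX _ _).mul (lead_C _)) ?_)
      · unfold sv
        rw [if_pos (by omega)]
        exact lead_CX _ _
      · refine lt_of_le_of_lt (Polynomial.natDegree_mul_le_of_le (lead_CX _ _).1 (lead_C _).1) ?_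
        omega

/-- The matrix of exponents. -/
def expM (m : Var f →₀ ℕ) (i j : Fin f) : ℕ :=
  if h : i < j then m (Sum.inl ⟨(i, j), h⟩) else 0

theorem sum_P2 (m : Var f →₀ ℕ) (g : Fin f → Fin f → ℕ) :
    ∑ p : P2 f, m (Sum.inl p) * g p.1.1 p.1.2 = ∑ i, ∑ j, expM m i j * g i j := by
  rw [← Fintype.sum_prod_type' (f := fun i j => expM m i j * g i j)]
  have h1 : ∑ p : P2 f, m (Sum.inl p) * g p.1.1 p.1.2 =
      ∑ p : P2 f, expM m p.1.1 p.1.2 * g p.1.1 p.1.2 := by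
    refine Finset.sum_congr rfl fun p _ => ?_
    rw [expM, dif_pos p.2]
  rw [h1, ← Finset.sum_subtype (Finset.univ.filter fun p : Fin f × Fin f => p.1 < p.2) (by simp)
    (fun p : Fin f × Fin f => expM m p.1 p.2 * g p.1 p.2), Finset.sum_filter]
  refine Finset.sum_congr rfl fun p _ => ?_
  split_ifs with h
  · rfl
  · rw [expM, dif_neg h, zero_mul]

theorem exp_apply (L1 L2 L3 : Fin f) (m : Var f →₀ ℕ) (c : Fin 3 × Fin f) :
    (m.sum (fun v k => k • xl L1 L2 L3 v)) c =
      ∑ i, ∑ j, expM m i j * ((if ((0 : Fin 3), j) = c then 1 else 0) +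
        (if ((1 : Fin 3), i) = c then 1 else 0)) +
      ∑ k, m (Sum.inr k) * ((if ((0 : Fin 3), if k = L1 then L2 else L1) = c then 1 else 0) +
        (if ((1 : Fin 3), if k = L1 ∨ k = L2 then L3 else L2) = c then 1 else 0) +
        (if ((2 : Fin 3), if k = L1 ∨ k = L2 then L3 else k) = c then 1 else 0)) := by
  rw [Finsupp.sum_fintype _ _ (by simp), Finsupp.finsetSum_apply, Fintype.sum_sum_type,
    ← sum_P2 m]
  simp [xl, Finsupp.single_apply, mul_add]

theorem exp_inj (L1 L2 L3 : Fin f) (h1 : L1.val + 1 = f) (h2 : L2.val + 2 = f)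
    (h3 : L3.val + 3 = f) :
    Set.InjOn (fun m : Var f →₀ ℕ => m.sum (fun v k => k • xl L1 L2 L3 v))
      {m | ∀ u v, Forb f u v → m u = 0 ∨ m v = 0} := by
  intro m hm n hn hmn
  have h12 : L1 ≠ L2 := fun h => by rw [h] at h1; omega
  have h13 : L1 ≠ L3 := fun h => by rw [h] at h1; omega
  have h23 : L2 ≠ L3 := fun h => by rw [h] at h2; omega
  have hc := fun c => DFunLike.congr_fun hmn c
  simp only [exp_apply] at hc
  have hch : ∀ m : Var f →₀ ℕ, (∀ u v, Forb f u v → m u = 0 ∨ m v = 0) →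
      ∀ i j k l, i < j → k < l → expM m i l = 0 ∨ expM m j k = 0 := by
    intro m hm i j k l hij hkl
    by_cases hil : i < l
    · by_cases hjk : j < k
      · simp only [expM, dif_pos hil, dif_pos hjk]
        exact hm _ _ ⟨hij, hkl⟩
      · right; simp [expM, hjk]
    · left; simp [expM, hil]
  have hz : ∀ m : Var f →₀ ℕ, ∀ j, j ≠ L1 → expM m L2 j = 0 := by
    intro m j hj
    rw [expM, dif_neg]
    intro h
    have : L2.val < j.val := h
    exact hj (Fin.ext (by omega))
  have ha : ∀ m : Var f →₀ ℕ, (∀ u v, Forb f u v → m u = 0 ∨ m v = 0) →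
      m (Sum.inr L1) ≠ 0 → ∀ j, expM m j L1 = 0 := by
    intro m hm hne j
    by_cases h : j < L1
    · rw [expM, dif_pos h]
      exact (hm (Sum.inr L1) (Sum.inl ⟨(j, L1), h⟩) (Or.inl ⟨h1, rfl⟩)).resolve_left hne
    · simp [expM, h]
  have hb : ∀ m : Var f →₀ ℕ, (∀ u v, Forb f u v → m u = 0 ∨ m v = 0) →
      m (Sum.inr L2) ≠ 0 → expM m L2 L1 = 0 := by
    intro m hm hne
    by_cases h : L2 < L1
    · rw [expM, dif_pos h]
      exact (hm (Sum.inr L2) (Sum.inl ⟨(L2, L1), h⟩) (Or.inr ⟨h2, rfl⟩)).resolve_left hne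
    · simp [expM, h]
  have hres := comb_inj L1 L2 L3 h12 h13 h23 (expM m) (expM n) (fun k => m (Sum.inr k))
    (fun k => n (Sum.inr k)) (hch m hm) (hch n hn) (hz m) (hz n) (ha m hm) (ha n hn)
    (hb m hm) (hb n hn)
    (by
      intro j
      have := hc (0, j)
      simpa using this)
    (by
      intro i
      have := hc (1, i)
      simp only [Prod.mk.injEq] at this
      rw [Finset.sum_comm, Finset.sum_comm (f := fun i_1 j => expM n i_1 j * _)] at this
      simpa [Finset.sum_comm] using this)
    (by
      intro i
      have := hc (2, i)
      simpa using this)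
  ext v
  rcases v with ⟨⟨i, j⟩, hij⟩ | k
  · have := hres.1 i j
    simpa only [expM, dif_pos hij] using this
  · exact hres.2 k

theorem eval_inj [IsDomain R] (hf : 4 ≤ f) (L1 L2 L3 : Fin f) (h1 : L1.val + 1 = f)
    (h2 : L2.val + 2 = f) (h3 : L3.val + 3 = f) (p : MvPolynomial (Var f) R)
    (hp : ∀ m ∈ p.support, ∀ u v, Forb f u v → m u = 0 ∨ m v = 0)
    (h0 : evalHom R L1 L2 (av R) (bv R) (sv R) p = 0) : p = 0 := by
  refine lead_indep (evalHom R L1 L2 (av R) (bv R) (sv R)) (wl f) (xl L1 L2 L3) (el R f) ?_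
    (fun v => (lead_var hf L1 L2 L3 h1 h2 h3 v).1) (fun v => (lead_var hf L1 L2 L3 h1 h2 h3 v).2)
    _ (exp_inj L1 L2 L3 h1 h2 h3) p hp h0
  rintro (v | v)
  · simp [el]
  · simp only [el]; split_ifs <;> simp

theorem hind [IsDomain R] (hf : 4 ≤ f) (p : MvPolynomial (Var f) R)
    (hp : ∀ m ∈ p.support, ∀ u v, Forb f u v → m u = 0 ∨ m v = 0)
    (h0 : p ∈ Jt R f) : p = 0 :=
  eval_inj hf ⟨f - 1, by omega⟩ ⟨f - 2, by omega⟩ ⟨f - 3, by omega⟩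
    (by simp only; omega) (by simp only; omega) (by simp only; omega) p hp (evalHom_J _ _ _ _ _ _ h0)

theorem quot_isDomain [IsDomain R] (hf : 4 ≤ f) :
    IsDomain (MvPolynomial (Var f) R ⧸ Jt R f) := by
  rw [Ideal.Quotient.isDomain_iff_prime]
  have : Jt R f = RingHom.ker (evalHom R (⟨f - 1, by omega⟩ : Fin f) ⟨f - 2, by omega⟩
      (av R) (bv R) (sv R)) := by
    apply le_antisymm
    · intro y hy; exact evalHom_J _ _ _ _ _ _ hy
    · intro y hy
      obtain ⟨p, hp, hyp⟩ := hspan hf y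
      have h0 := evalHom_J (⟨f - 1, by omega⟩ : Fin f) ⟨f - 2, by omega⟩
        (av R) (bv R) (sv R) _ hyp
      rw [map_sub, RingHom.mem_ker.1 hy, zero_sub, neg_eq_zero] at h0
      have : p = 0 := eval_inj hf _ _ ⟨f - 3, by omega⟩
        (by simp only; omega) (by simp only; omega) (by simp only; omega) p hp h0
      simpa [this] using hyp
  rw [this]
  exact RingHom.ker_isPrime _

end Indep

section Pivot

variable {R : Type u} [CommRing R] {f : ℕ}

/-- Index set for the free variables on the chart of the pivot `p`, `q`. -/
abbrev PV (p q : Fin f) := Option ({k : Fin f // k ≠ p ∧ k ≠ q} × Fin 3)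

variable (R) in
/-- The class of the entry `x_{ij}` in the quotient. -/
abbrev xq (i j : Fin f) : MvPolynomial (Var f) R ⧸ Jt R f :=
  Ideal.Quotient.mkₐ R (Jt R f) (xvt R f i j)

variable (R) in
/-- The class of the entry `t_i` in the quotient. -/
abbrev tq (i : Fin f) : MvPolynomial (Var f) R ⧸ Jt R f :=
  Ideal.Quotient.mkₐ R (Jt R f) (tvt R f i)

theorem xq_swap (i j : Fin f) : xq R j i = - xq R i j := by
  rw [xq, xvt_swap, map_neg]

theorem xq_self (i : Fin f) : xq R i i = 0 := by
  rw [xq, xvt_self, map_zero]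

theorem xq_pf (i j k l : Fin f) : xq R i j * xq R k l - xq R i k * xq R j l
    + xq R i l * xq R j k = 0 := by
  have h : Ideal.Quotient.mkₐ R (Jt R f) (pf4t R f i j k l) = 0 :=
    Ideal.Quotient.eq_zero_iff_mem.2 (pf4_mem i j k l)
  simpa only [pf4t, map_add, map_sub, map_mul] using h

theorem tq_sum (j : Fin f) : ∑ i, tq R i * xq R i j = 0 := by
  have h : Ideal.Quotient.mkₐ R (Jt R f) (tX R f j) = 0 :=
    Ideal.Quotient.eq_zero_iff_mem.2 (tX_mem j)
  simpa only [tX, map_sum, map_mul] using h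

variable (R) in
/-- The chart of the pivot `p`, `q`. -/
def chart (p q : Fin f) : MvPolynomial (PV p q) R →ₐ[R] MvPolynomial (Var f) R ⧸ Jt R f :=
  MvPolynomial.aeval (fun v => match v with
    | none => xq R p q
    | some (k, c) => if c = 0 then xq R p k else if c = 1 then xq R q k else tq R k)

theorem chart_none (p q : Fin f) : chart R p q (MvPolynomial.X none) = xq R p q := by
  simp [chart]

theorem chart_surj (p q : Fin f) (hpq : p ≠ q) (s : MvPolynomial (Var f) R ⧸ Jt R f) :
    ∃ (n : ℕ) (b : MvPolynomial (PV p q) R),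
      (chart R p q (MvPolynomial.X none)) ^ n * s = chart R p q b := by
  set x := chart R p q (MvPolynomial.X none) with hx
  let T : Subalgebra R (MvPolynomial (Var f) R ⧸ Jt R f) :=
    { carrier := {s | ∃ (n : ℕ) (b : MvPolynomial (PV p q) R), x ^ n * s = chart R p q b}
      mul_mem' := by
        rintro s t ⟨n, b, h⟩ ⟨m, c, h'⟩
        exact ⟨n + m, b * c, by rw [map_mul, ← h, ← h']; ring⟩
      add_mem' := by
        rintro s t ⟨n, b, h⟩ ⟨m, c, h'⟩
        exact ⟨n + m, MvPolynomial.X none ^ m * b + MvPolynomial.X none ^ n * c, by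
          rw [map_add, map_mul, map_mul, map_pow, map_pow, ← h, ← h', ← hx]; ring⟩
      algebraMap_mem' := fun r => ⟨0, algebraMap R _ r, by simp⟩ }
  have hmem : ∀ b, chart R p q b ∈ T := fun b => ⟨0, b, by simp⟩
  have hxm : ∀ s, x * s ∈ T → s ∈ T := by
    rintro s ⟨n, b, h⟩
    exact ⟨n + 1, b, by rw [← h]; ring⟩
  have hpqT : xq R p q ∈ T := by rw [← chart_none]; exact hmem _
  have hpk : ∀ k, xq R p k ∈ T := by
    intro k
    by_cases h1 : k = p
    · subst h1; rw [xq_self]; exact T.zero_mem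
    by_cases h2 : k = q
    · subst h2; exact hpqT
    · have : chart R p q (MvPolynomial.X (some (⟨k, h1, h2⟩, 0))) = xq R p k := by simp [chart]
      rw [← this]; exact hmem _
  have hqk : ∀ k, xq R q k ∈ T := by
    intro k
    by_cases h1 : k = p
    · subst h1; rw [xq_swap]; exact T.neg_mem hpqT
    by_cases h2 : k = q
    · subst h2; rw [xq_self]; exact T.zero_mem
    · have : chart R p q (MvPolynomial.X (some (⟨k, h1, h2⟩, 1))) = xq R q k := by simp [chart]
      rw [← this]; exact hmem _
  have hkl : ∀ k l, xq R k l ∈ T := by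
    intro k l
    apply hxm
    have : x * xq R k l = xq R p k * xq R q l - xq R p l * xq R q k := by
      rw [hx, chart_none]; linear_combination xq_pf (R := R) p q k l
    rw [this]
    exact T.sub_mem (T.mul_mem (hpk _) (hqk _)) (T.mul_mem (hpk _) (hqk _))
  have htk : ∀ k, k ≠ p → k ≠ q → tq R k ∈ T := by
    intro k h1 h2
    have : chart R p q (MvPolynomial.X (some (⟨k, h1, h2⟩, 2))) = tq R k := by simp [chart]
    rw [← this]; exact hmem _
  have hrest : ∀ j, ∑ i ∈ (Finset.univ.erase p).erase q, tq R i * xq R i j ∈ T := by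
    intro j
    refine T.sum_mem fun i hi => ?_
    simp only [Finset.mem_erase] at hi
    exact T.mul_mem (htk i hi.2.1 hi.1) (hkl _ _)
  have hsplit : ∀ j, tq R p * xq R p j + (tq R q * xq R q j +
      ∑ i ∈ (Finset.univ.erase p).erase q, tq R i * xq R i j) = 0 := by
    intro j
    rw [Finset.add_sum_erase _ (fun i => tq R i * xq R i j)
      (Finset.mem_erase.2 ⟨hpq.symm, Finset.mem_univ q⟩),
      Finset.add_sum_erase _ (fun i => tq R i * xq R i j) (Finset.mem_univ p)]
    exact tq_sum j
  have htp : tq R p ∈ T := by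
    apply hxm
    have h := hsplit q
    rw [xq_self] at h
    have : x * tq R p = - ∑ i ∈ (Finset.univ.erase p).erase q, tq R i * xq R i q := by
      rw [hx, chart_none]; linear_combination h
    rw [this]; exact T.neg_mem (hrest q)
  have htqm : tq R q ∈ T := by
    apply hxm
    have h := hsplit p
    rw [xq_self, xq_swap p q] at h
    have : x * tq R q = ∑ i ∈ (Finset.univ.erase p).erase q, tq R i * xq R i p := by
      rw [hx, chart_none]; linear_combination - h
    rw [this]; exact hrest p
  have hall : ∀ y : MvPolynomial (Var f) R, Ideal.Quotient.mkₐ R (Jt R f) y ∈ T := by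
    intro y
    induction y using MvPolynomial.induction_on with
    | C a =>
      have : Ideal.Quotient.mkₐ R (Jt R f) (MvPolynomial.C a) = algebraMap R _ a := by
        rw [← MvPolynomial.algebraMap_eq, AlgHom.commutes]
      rw [this]; exact T.algebraMap_mem a
    | add a b ha hb => rw [map_add]; exact T.add_mem ha hb
    | mul_X a v ha =>
      rw [map_mul]
      refine T.mul_mem ha ?_
      rcases v with ⟨⟨i, j⟩, hij⟩ | k
      · rw [← xvt_lt]; exact hkl i j
      · by_cases h1 : k = p
        · subst h1; exact htp
        by_cases h2 : k = q
        · subst h2; exact htqm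
        exact htk k h1 h2
  obtain ⟨y, rfl⟩ := Ideal.Quotient.mkₐ_surjective R (Jt R f) s
  exact hall y

/-- The free variables of the chart, extended by zero. -/
def gv (R : Type u) [CommRing R] (p q : Fin f) (c : Fin 3) (k : Fin f) :
    MvPolynomial (PV p q) R :=
  if h : k ≠ p ∧ k ≠ q then MvPolynomial.X (some (⟨k, h⟩, c)) else 0

theorem div_aux1 {K : Type*} [Field K] (x y z : K) (hx : x ≠ 0) :
    x * (y / x) - 0 * z = y := by field_simp; ring

theorem div_aux2 {K : Type*} [Field K] (x y : K) (hx : x ≠ 0) :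
    -y / x * (0 * 0 - 1 * x) + 0 + 0 = y := by field_simp; ring

theorem chart_inj [IsDomain R] (p q : Fin f) (hpq : p ≠ q) :
    Function.Injective (chart R p q) := by
  let B := MvPolynomial (PV p q) R
  let K := FractionRing B
  let A : B →ₐ[R] K := IsScalarTower.toAlgHom R B K
  have hA : Function.Injective A := IsFractionRing.injective B K
  let x : K := A (MvPolynomial.X none)
  have hx : x ≠ 0 := by
    intro h
    exact MvPolynomial.X_ne_zero (R := R) (none : PV p q) (hA (h.trans (map_zero A).symm))
  let a : Fin f → K := fun k => if k = q then 1 else A (gv R p q 0 k) / x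
  let b : Fin f → K := fun k => if k = p then x else - A (gv R p q 1 k)
  let s : Fin f → K := fun k => - A (gv R p q 2 k) / x
  have gp : ∀ c, gv R p q c p = 0 := fun c => by simp [gv]
  have gq : ∀ c, gv R p q c q = 0 := fun c => by simp [gv]
  have hap : a p = 0 := by simp [a, hpq, gp]
  have haq : a q = 1 := by simp [a]
  have hbp : b p = x := by simp [b]
  have hbq : b q = 0 := by simp [b, hpq.symm, gq]
  let E : (MvPolynomial (Var f) R ⧸ Jt R f) →ₐ[R] K :=
    Ideal.Quotient.liftₐ (Jt R f) (evalHom R p q a b s) (fun y hy => evalHom_J p q a b s y hy)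
  have hE : ∀ y, E (Ideal.Quotient.mkₐ R (Jt R f) y) = evalHom R p q a b s y := fun y => rfl
  have hcomp : E.comp (chart R p q) = A := by
    apply MvPolynomial.algHom_ext
    rintro (_ | ⟨⟨k, hk⟩, c⟩)
    · rw [AlgHom.comp_apply, chart_none, xq, hE, evalHom_xvt, hap, haq, hbp]
      simp [x]
    · have hg : ∀ c, gv R p q c k = MvPolynomial.X (some (⟨k, hk⟩, c)) := fun c => by
        rw [gv, dif_pos hk]
      have hak : a k = A (MvPolynomial.X (some (⟨k, hk⟩, 0))) / x := by simp [a, hk.2, hg]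
      have hbk : b k = - A (MvPolynomial.X (some (⟨k, hk⟩, 1))) := by simp [b, hk.1, hg]
      have hsk : s k = - A (MvPolynomial.X (some (⟨k, hk⟩, 2))) / x := by simp [s, hg]
      rw [AlgHom.comp_apply]
      fin_cases c
      · have : chart R p q (MvPolynomial.X (some (⟨k, hk⟩, 0))) = xq R p k := by simp [chart]
        change E (chart R p q (MvPolynomial.X (some (⟨k, hk⟩, 0)))) = _
        rw [this, xq, hE, evalHom_xvt, hap, hbp, hak]
        exact div_aux1 _ _ _ hx
      · have : chart R p q (MvPolynomial.X (some (⟨k, hk⟩, 1))) = xq R q k := by simp [chart]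
        change E (chart R p q (MvPolynomial.X (some (⟨k, hk⟩, 1)))) = _
        rw [this, xq, hE, evalHom_xvt, haq, hbq, hbk]
        simp
      · have : chart R p q (MvPolynomial.X (some (⟨k, hk⟩, 2))) = tq R k := by simp [chart]
        change E (chart R p q (MvPolynomial.X (some (⟨k, hk⟩, 2)))) = _
        rw [this, tq, hE, evalHom_tvt, tvec, if_neg hk.1, if_neg hk.2, hap, hbp, haq, hbq, hsk]
        exact div_aux2 _ _ hx
  intro y z h
  apply hA
  rw [← hcomp, AlgHom.comp_apply, AlgHom.comp_apply, h]

theorem quot_intClosed [IsDomain R] [IsIntegrallyClosed R] (hf : 4 ≤ f) :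
    IsIntegrallyClosed (MvPolynomial (Var f) R ⧸ Jt R f) := by
  have hdom := quot_isDomain (R := R) hf
  let i0 : Fin f := ⟨0, by omega⟩
  let i1 : Fin f := ⟨1, by omega⟩
  let i2 : Fin f := ⟨2, by omega⟩
  have h01 : i0 < i1 := by simp [i0, i1]
  have h02 : i0 < i2 := by simp [i0, i2]
  have hpiv : ∀ p q : Fin f, p ≠ q → ∀ z : FractionRing (MvPolynomial (Var f) R ⧸ Jt R f),
      IsIntegral (MvPolynomial (Var f) R ⧸ Jt R f) z →
      ∃ (n : ℕ) (a : MvPolynomial (Var f) R ⧸ Jt R f),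
        algebraMap _ (FractionRing (MvPolynomial (Var f) R ⧸ Jt R f)) (xq R p q) ^ n * z =
          algebraMap _ _ a := by
    intro p q hpq z hz
    have := mvpoly_intClosed (PV p q) R
    have h := integral_away (chart R p q).toRingHom (chart_inj p q hpq) (MvPolynomial.X none)
      (MvPolynomial.X_ne_zero _) (chart_surj p q hpq) z hz
    have e : (chart R p q).toRingHom (MvPolynomial.X none) = xq R p q := chart_none p q
    rwa [e] at h
  refine intClosed_of_reg (xq R i0 i1) (xq R i0 i2) ?_ ?_ (hpiv _ _ h01.ne) (hpiv _ _ h02.ne)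
  · rw [← chart_none]
    intro h
    exact MvPolynomial.X_ne_zero (R := R) (none : PV i0 i1)
      (chart_inj i0 i1 h01.ne (h.trans (map_zero _).symm))
  · intro a b hab
    obtain ⟨q, rfl⟩ := Ideal.Quotient.mkₐ_surjective R (Jt R f) a
    obtain ⟨r, rfl⟩ := Ideal.Quotient.mkₐ_surjective R (Jt R f) b
    have hF : ∀ (j : Fin f) (h : i0 < j), j.val < 3 → ∀ u v, Forb f u v →
        u ≠ Sum.inl ⟨(i0, j), h⟩ ∧ v ≠ Sum.inl ⟨(i0, j), h⟩ := by
      intro j h hj u v huv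
      constructor
      · rintro rfl
        rcases v with ⟨⟨k, l⟩, hkl⟩ | v
        · have h1 : i0.val < k.val := huv.1
          have h2 : l.val < j.val := huv.2
          have h3 : k.val < l.val := hkl
          omega
        · exact huv
      · rintro rfl
        rcases u with ⟨⟨k, l⟩, hkl⟩ | u
        · have h1 : k.val < 0 := huv.1
          omega
        · rcases huv with ⟨h1, h2⟩ | ⟨h1, h2⟩
          · have : j = u := h2
            rw [← this] at h1; omega
          · have : i0 = u := h2
            rw [← this] at h1
            have h3 : i0.val = 0 := rfl
            omega
    have hm : (MvPolynomial.X (Sum.inl ⟨(i0, i2), h02⟩) * q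
        - MvPolynomial.X (Sum.inl ⟨(i0, i1), h01⟩) * r : MvPolynomial (Var f) R) ∈ Jt R f := by
      rw [← Ideal.Quotient.eq_zero_iff_mem, ← xvt_lt, ← xvt_lt]
      change Ideal.Quotient.mkₐ R (Jt R f) _ = 0
      rw [map_sub, map_mul, map_mul, hab, sub_self]
    obtain ⟨q', hq'⟩ := reg_pair (Jt R f) (Forb f) (hspan hf) (hind hf)
      (Sum.inl ⟨(i0, i1), h01⟩) (Sum.inl ⟨(i0, i2), h02⟩)
      (by simp [i1, i2]) (hF i1 h01 (by simp [i1]))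
      (hF i2 h02 (by simp [i2])) q r hm
    refine ⟨Ideal.Quotient.mkₐ R (Jt R f) q', ?_⟩
    rw [← Ideal.Quotient.eq_zero_iff_mem, ← xvt_lt] at hq'
    change Ideal.Quotient.mkₐ R (Jt R f) _ = 0 at hq'
    rw [map_sub, map_mul] at hq'
    exact sub_eq_zero.1 hq'

end Pivot

section Final

theorem normal_of_local {S S' : Type*} [CommRing S] [CommRing S'] [Algebra S S']
    (M : Submonoid S) [IsLocalization M S'] [IsDomain S'] [IsIntegrallyClosed S']
    (Q : Ideal S) [Q.IsPrime] (hM : M ≤ Q.primeCompl) :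
    IsDomain (Localization.AtPrime Q) ∧ IsIntegrallyClosed (Localization.AtPrime Q) := by
  let g : S' →+* Localization.AtPrime Q :=
    IsLocalization.lift (M := M) (g := algebraMap S (Localization.AtPrime Q))
      (fun y => IsLocalization.map_units (Localization.AtPrime Q) (⟨y.1, hM y.2⟩ : Q.primeCompl))
  let _ : Algebra S' (Localization.AtPrime Q) := g.toAlgebra
  have : IsScalarTower S S' (Localization.AtPrime Q) := by
    refine IsScalarTower.of_algebraMap_eq fun s => ?_
    exact (IsLocalization.lift_eq (M := M) (S := S') _ s).symm
  have hloc := IsLocalization.isLocalization_of_submonoid_le S' (Localization.AtPrime Q) M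
    Q.primeCompl hM
  have hle : Q.primeCompl.map (algebraMap S S') ≤ nonZeroDivisors S' := by
    apply le_nonZeroDivisors_of_noZeroDivisors
    rintro ⟨n, hn, h0⟩
    have h1 : algebraMap S S' n = algebraMap S S' 0 := by rw [map_zero]; exact h0
    obtain ⟨m, hm⟩ := (IsLocalization.eq_iff_exists M S').1 h1
    have h2 : m.1 * n ∈ Q := by rw [hm, mul_zero]; exact Q.zero_mem
    rcases (inferInstance : Q.IsPrime).mem_or_mem h2 with h | h
    · exact hM m.2 h
    · exact hn h
  exact ⟨IsLocalization.isDomain_of_le_nonZeroDivisors _ hle,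
    isIntegrallyClosed_of_isLocalization _ _ hle⟩

theorem map_xvt {R S : Type u} [CommRing R] [CommRing S] (φ : R →+* S) (f : ℕ) (i j : Fin f) :
    MvPolynomial.map φ (xvt R f i j) = xvt S f i j := by
  unfold xvt
  split_ifs <;> simp

theorem map_Jt {R S : Type u} [CommRing R] [CommRing S] (φ : R →+* S) (f : ℕ) :
    (Jt R f).map (MvPolynomial.map φ) = Jt S f := by
  have hpf : ∀ i j k l, MvPolynomial.map φ (pf4t R f i j k l) = pf4t S f i j k l := by
    intro i j k l
    simp only [pf4t, map_add, map_sub, map_mul, map_xvt]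
  have htx : ∀ j, MvPolynomial.map φ (tX R f j) = tX S f j := by
    intro j
    simp [tX, map_xvt, tvt]
  rw [Jt, Jt, Submodule.add_eq_sup, Submodule.add_eq_sup, Ideal.map_sup, Pf4t, Pf4t, ItX, ItX,
    Ideal.map_span, Ideal.map_span]
  congr 2
  · ext y
    constructor
    · rintro ⟨_, ⟨i, j, k, l, h1, h2, h3, rfl⟩, rfl⟩
      exact ⟨i, j, k, l, h1, h2, h3, hpf i j k l⟩
    · rintro ⟨i, j, k, l, h1, h2, h3, rfl⟩
      exact ⟨_, ⟨i, j, k, l, h1, h2, h3, rfl⟩, hpf i j k l⟩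
  · ext y
    constructor
    · rintro ⟨_, ⟨j, rfl⟩, rfl⟩
      exact ⟨j, htx j⟩
    · rintro ⟨j, rfl⟩
      exact ⟨_, ⟨j, rfl⟩, htx j⟩

/-- The retraction of the quotient onto the base ring. -/
def retr (R : Type u) [CommRing R] (f : ℕ) : (MvPolynomial (Var f) R ⧸ Jt R f) →+* R :=
  Ideal.Quotient.lift (Jt R f) MvPolynomial.constantCoeff (by
    have hx : ∀ i j, MvPolynomial.constantCoeff (xvt R f i j) = 0 := by
      intro i j
      unfold xvt
      split_ifs <;> simp
    have : Jt R f ≤ RingHom.ker (MvPolynomial.constantCoeff (R := R) (σ := Var f)) := by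
      rw [Jt, Pf4t, ItX, Submodule.add_eq_sup, sup_le_iff, Ideal.span_le, Ideal.span_le]
      constructor
      · rintro _ ⟨i, j, k, l, -, -, -, rfl⟩
        simp [pf4t, hx]
      · rintro _ ⟨j, rfl⟩
        simp [tX, hx]
    exact fun a ha => RingHom.mem_ker.1 (this ha))

theorem retr_algebraMap (R : Type u) [CommRing R] (f : ℕ) (r : R) :
    retr R f (algebraMap R _ r) = r := by
  have : algebraMap R (MvPolynomial (Var f) R ⧸ Jt R f) r =
    Ideal.Quotient.mk (Jt R f) (MvPolynomial.C r) := rfl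
  rw [this]
  exact (Ideal.Quotient.lift_mk (Jt R f) _ _).trans (MvPolynomial.constantCoeff_C _ r)

attribute [local instance] MvPolynomial.algebraMvPolynomial in
theorem normal_up (R : Type u) [CommRing R] (f : ℕ) (hf : 4 ≤ f) (hR : IsNormalRing R) :
    IsNormalRing (MvPolynomial (Var f) R ⧸ Jt R f) := by
  intro Q hQ
  let P : Ideal R := Q.comap (algebraMap R _)
  have hP : P.IsPrime := Ideal.comap_isPrime _ Q
  obtain ⟨h1, h2⟩ := hR P
  let R' := Localization.AtPrime P
  have hmap : (Jt R f).map (algebraMap (MvPolynomial (Var f) R) (MvPolynomial (Var f) R')) =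
      Jt R' f := map_Jt (algebraMap R R') f
  have hd : IsDomain (MvPolynomial (Var f) R' ⧸
      (Jt R f).map (algebraMap (MvPolynomial (Var f) R) (MvPolynomial (Var f) R'))) := by
    rw [hmap]; exact quot_isDomain hf
  have hc : IsIntegrallyClosed (MvPolynomial (Var f) R' ⧸
      (Jt R f).map (algebraMap (MvPolynomial (Var f) R) (MvPolynomial (Var f) R'))) := by
    rw [hmap]; exact quot_intClosed hf
  have hl : IsLocalization (P.primeCompl.map (MvPolynomial.C (σ := Var f)))
    (MvPolynomial (Var f) R') := MvPolynomial.isLocalization P.primeCompl R'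
  refine normal_of_local (S' := MvPolynomial (Var f) R' ⧸
      (Jt R f).map (algebraMap (MvPolynomial (Var f) R) (MvPolynomial (Var f) R')))
    (Algebra.algebraMapSubmonoid (MvPolynomial (Var f) R ⧸ Jt R f)
      (P.primeCompl.map (MvPolynomial.C (σ := Var f)))) Q ?_
  rintro _ ⟨_, ⟨r, hr, rfl⟩, rfl⟩
  exact hr

theorem normal_down (R : Type u) [CommRing R] (f : ℕ)
    (hS : IsNormalRing (MvPolynomial (Var f) R ⧸ Jt R f)) : IsNormalRing R := by
  intro P hP
  let Q : Ideal (MvPolynomial (Var f) R ⧸ Jt R f) := P.comap (retr R f)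
  have hQ : Q.IsPrime := Ideal.comap_isPrime _ P
  have hPQ : P = Q.comap (algebraMap R (MvPolynomial (Var f) R ⧸ Jt R f)) := by
    ext r
    simp only [Q, Ideal.mem_comap, retr_algebraMap]
  obtain ⟨h1, h2⟩ := hS Q
  refine intClosed_retract (A := Localization.AtPrime P) (B := Localization.AtPrime Q)
    (Localization.localRingHom P Q (algebraMap R _) hPQ)
    (Localization.localRingHom Q P (retr R f) rfl) ?_
  intro a
  have : (Localization.localRingHom Q P (retr R f) rfl).comp
      (Localization.localRingHom P Q (algebraMap R _) hPQ) = RingHom.id _ := by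
    apply IsLocalization.ringHom_ext P.primeCompl
    ext r
    simp [Localization.localRingHom_to_map, retr_algebraMap]
  exact congrArg (fun φ : _ →+* _ => φ a) this

end Final

/-- for an arbitrary Noetherian ring `R₀` and `f ≥ 4`, with
`J = Pf₄(X) + I₁(tX)` in `𝓡 = R₀[x_{i,j}; t_i]`: the ring `𝓡/J` is a domain
iff `R₀` is a domain, and `𝓡/J` is normal iff `R₀` is normal. -/
theorem stmt_16 (R₀ : Type u) [CommRing R₀] [IsNoetherianRing R₀] (f : ℕ) (hf : 4 ≤ f) :
    (IsDomain (MvPolynomial (Var f) R₀ ⧸ Jt R₀ f) ↔ IsDomain R₀) ∧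
      (IsNormalRing (MvPolynomial (Var f) R₀ ⧸ Jt R₀ f) ↔ IsNormalRing R₀) := by
  refine ⟨⟨fun h => ?_, fun h => quot_isDomain hf⟩, ⟨normal_down R₀ f, normal_up R₀ f hf⟩⟩
  exact (Function.LeftInverse.injective (retr_algebraMap R₀ f)).isDomain
    (algebraMap R₀ (MvPolynomial (Var f) R₀ ⧸ Jt R₀ f))

end AluffiStmt
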